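/- arXiv:1402.0156 — 2 statements merged into one kernel-verified Lean document; each statement's English description precedes it below -/
import Mathlib

section
/- For any nonempty set S ⊆ G, any x ∈ S and any y ∈ G, the harmonic measure satisfies π(y)·h_{y,S}(x) = π(x)·Pr_x[T_y < T_S^+] / Pr_y[T_S < T_y^+]. -/
open MeasureTheory Finset
open scoped ENNReal

namespace HM

variable {G : Type*} [Fintype G] [DecidableEq G]

/-- `P` is a stochastic (transition) matrix. -/
def IsStochastic (P : Matrix G G ℝ) : Prop :=
  (∀ x y, 0 ≤ P x y) ∧ ∀ x, ∑ y, P x y = 1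

/-- Irreducibility: every state reaches every other state. -/
def IsIrreducible (P : Matrix G G ℝ) : Prop :=
  ∀ x y : G, ∃ t : ℕ, 0 < (P ^ t) x y

/-- Aperiodicity: the gcd of return times is `1` at every state. -/
def IsAperiodic (P : Matrix G G ℝ) : Prop :=
  ∀ x : G, ∀ d : ℕ, (∀ t : ℕ, 0 < (P ^ t) x x → d ∣ t) → d = 1

/-- `P` is reversible with respect to the full-support probability vector `pi`. -/
def IsReversible (P : Matrix G G ℝ) (pi : G → ℝ) : Prop :=
  (∀ x, 0 < pi x) ∧ (∑ x, pi x = 1) ∧ ∀ x y, pi x * P x y = pi y * P y x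

variable [MeasurableSpace G]

/-- `μ x` is the law of the Markov chain with transition matrix `P` started at `x`:
all finite-dimensional (cylinder) probabilities are given by products of transition
probabilities. -/
def IsMarkovChain (P : Matrix G G ℝ) (μ : G → Measure (ℕ → G)) : Prop :=
  (∀ x, IsProbabilityMeasure (μ x)) ∧
  ∀ (x : G) (t : ℕ) (w : ℕ → G),
    μ x {ω | ∀ i ≤ t, ω i = w i} =
      ENNReal.ofReal ((if w 0 = x then 1 else 0) * ∏ i ∈ Finset.range t, P (w i) (w (i + 1)))

/-- Hitting time `T_S = inf {t ≥ 0 : X_t ∈ S}`, with value `⊤` if `S` is never hit. -/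
noncomputable def hit (S : Set G) (ω : ℕ → G) : ℕ∞ :=
  sInf ((↑) '' {n : ℕ | ω n ∈ S})

/-- Return time `T_S^+ = inf {t ≥ 1 : X_t ∈ S}`, with value `⊤` if `S` is never hit. -/
noncomputable def hitPlus (S : Set G) (ω : ℕ → G) : ℕ∞ :=
  sInf ((↑) '' {n : ℕ | 1 ≤ n ∧ ω n ∈ S})

/-- The event `X_{T_S} = x` (in particular `T_S < ∞`). -/
def hitsAt (S : Set G) (x : G) : Set (ℕ → G) :=
  {ω | ∃ n : ℕ, hit S ω = (n : ℕ∞) ∧ ω n = x}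

/-- Harmonic measure on `S` from `y`: `h_{y,S}(x) = Pr_y[X_{T_S} = x]`. -/
noncomputable def harm (μ : G → Measure (ℕ → G)) (S : Set G) (y x : G) : ℝ :=
  (μ y (hitsAt S x)).toReal

/-- Harmonic measure on `S` from the stationary distribution:
`h_S(x) = ∑_y π(y) h_{y,S}(x)`. -/
noncomputable def harmStat (pi : G → ℝ) (μ : G → Measure (ℕ → G)) (S : Set G) (x : G) : ℝ :=
  ∑ y, pi y * harm μ S y x

/-- `π(S) = ∑_{x ∈ S} π(x)`. -/
noncomputable def piOf (pi : G → ℝ) (S : Set G) : ℝ :=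
  ∑ x, S.indicator pi x

/-- `λ = max_{j > 1} |λ_j|`, via the variational characterization: the largest absolute
value of the quadratic form of `P` on the orthogonal complement of the constants in
`L²(π)`.  For a reversible chain this equals the largest absolute value of a
non-Perron eigenvalue of `P`. -/
noncomputable def lam (P : Matrix G G ℝ) (pi : G → ℝ) : ℝ :=
  sSup {r : ℝ | ∃ f : G → ℝ, ∑ x, pi x * f x = 0 ∧ ∑ x, pi x * f x ^ 2 = 1 ∧
    r = |∑ x, pi x * (f x * ∑ y, P x y * f y)|}

/-- `π_min = min_x π(x)`. -/
noncomputable def pimin (pi : G → ℝ) : ℝ := ⨅ x, pi x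

/-- `π_max = max_x π(x)`. -/
noncomputable def pimax (pi : G → ℝ) : ℝ := ⨆ x, pi x

/-- `u(P) = min_{x ≠ y} Pr_x[T_y < T_x^+]`. -/
noncomputable def uP (μ : G → Measure (ℕ → G)) : ℝ :=
  sInf {r : ℝ | ∃ x y : G, x ≠ y ∧
    r = (μ x {ω | hit {y} ω < hitPlus {x} ω}).toReal}

/-- `E_x[T_S^+]` (as an extended nonnegative real, then converted to `ℝ`). -/
noncomputable def expHitPlus (μ : G → Measure (ℕ → G)) (S : Set G) (x : G) : ℝ :=
  (∫⁻ ω, (hitPlus S ω : ℝ≥0∞) ∂ μ x).toReal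

/-- The number of distinct states visited strictly before the return time `T_S^+`,
i.e. `|{X_0, X_1, …, X_{T_S^+ − 1}}|`. -/
noncomputable def visited (S : Set G) (ω : ℕ → G) : ℕ :=
  Set.ncard {g : G | ∃ n : ℕ, (n : ℕ∞) < hitPlus S ω ∧ ω n = g}

/-!
The functions `a ↦ Pr_a[X_T ∈ B]`, `T = T_A^+`, solve a Dirichlet problem `v = P f` with `f = 1_B`
on `A` and `f = v` off `A`, and everything is read off from this equation. By the maximum principle
its solution is unique, so comparing solutions replaces the strong Markov property: stopping at
`y ∉ S` gives, at `y`, `h_{y,S}(x) = Pr_y[X_T = x] + Pr_y[X_T = y] h_{y,S}(x)` with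
`T = T_{S ∪ {y}}^+`, that is `h_{y,S}(x) Pr_y[T_S < T_y^+] = Pr_y[X_T = x]`. Since `P` is
self-adjoint in `L²(π)`, Green's identity for two solutions gives
`π(y) Pr_y[X_T = x] = π(x) Pr_x[X_T = y]`, without any sum over paths.
-/

section DirichletProblem

open scoped Matrix

variable {G : Type*} [Fintype G] {P : Matrix G G ℝ} {A B S : Set G} {φ ψ v w : G → ℝ}

open Classical in
/-- `v` solves the Dirichlet problem "on return" for `P` with boundary values `φ` on `A`, that is
`v a = E_a[φ (X_T)]` with `T = T_A^+`. The boundary values are attained at the *next* visit to `A`,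
so `v` need not agree with `φ` on `A`. -/
def IsReturnSolution (P : Matrix G G ℝ) (A : Set G) (φ v : G → ℝ) : Prop :=
  v = P *ᵥ A.piecewise φ v

theorem sum_mul_mulVec_comm {pi : G → ℝ} (hrev : ∀ x y, pi x * P x y = pi y * P y x)
    (f g : G → ℝ) : ∑ a, pi a * (f a * (P *ᵥ g) a) = ∑ a, pi a * ((P *ᵥ f) a * g a) := by
  simp only [Matrix.mulVec, dotProduct, Finset.mul_sum, Finset.sum_mul]
  rw [Finset.sum_comm]
  refine Finset.sum_congr rfl fun b _ => Finset.sum_congr rfl fun a _ => ?_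
  linear_combination f a * g b * hrev a b

theorem IsReturnSolution.green_identity {pi : G → ℝ}
    (hrev : ∀ x y, pi x * P x y = pi y * P y x)
    (hv : IsReturnSolution P A φ v) (hw : IsReturnSolution P A ψ w) :
    ∑ a, pi a * (A.indicator φ a * w a) = ∑ a, pi a * (v a * A.indicator ψ a) := by
  classical
  have hsymm := sum_mul_mulVec_comm hrev (A.piecewise φ v) (A.piecewise ψ w)
  rw [← hv, ← hw, ← sub_eq_zero, ← Finset.sum_sub_distrib] at hsymm
  rw [← sub_eq_zero, ← Finset.sum_sub_distrib, ← hsymm]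
  refine Finset.sum_congr rfl fun a _ => ?_
  by_cases ha : a ∈ A <;> simp [ha]

theorem IsReturnSolution.add (hv : IsReturnSolution P A φ v) (hw : IsReturnSolution P A ψ w) :
    IsReturnSolution P A (φ + ψ) (v + w) := by
  classical
  have hsplit : A.piecewise (φ + ψ) (v + w) = A.piecewise φ v + A.piecewise ψ w := by
    ext a
    by_cases ha : a ∈ A <;> simp [ha]
  rw [IsReturnSolution, hsplit, Matrix.mulVec_add, ← hv, ← hw]

theorem IsReturnSolution.smul (r : ℝ) (hv : IsReturnSolution P A φ v) :
    IsReturnSolution P A (r • φ) (r • v) := by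
  classical
  have hsplit : A.piecewise (r • φ) (r • v) = r • A.piecewise φ v := by
    ext a
    by_cases ha : a ∈ A <;> simp [ha]
  rw [IsReturnSolution, hsplit, Matrix.mulVec_smul, ← hv]

open Classical in
theorem IsReturnSolution.congr (hv : IsReturnSolution P A φ v)
    (h : A.piecewise φ v = B.piecewise ψ v) : IsReturnSolution P B ψ v :=
  hv.trans (congrArg (P *ᵥ ·) h)

theorem IsStochastic.isReturnSolution_one (hP : IsStochastic P) (A : Set G) :
    IsReturnSolution P A 1 1 := by
  ext a
  simp [Matrix.mulVec, dotProduct, hP.2 a]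

theorem IsStochastic.exists_ne_zero (hP : IsStochastic P) (a : G) : ∃ c, P a c ≠ 0 := by
  by_contra! hzero
  simpa [hzero] using hP.2 a

theorem IsStochastic.eq_of_mulVec_eq {f : G → ℝ} {M : ℝ} (hP : IsStochastic P)
    (hf : ∀ c, f c ≤ M) {a c : G} (ha : (P *ᵥ f) a = M) (hc : P a c ≠ 0) : f c = M := by
  have hnonneg : ∀ c ∈ Finset.univ, 0 ≤ P a c * (M - f c) := fun c _ =>
    mul_nonneg (hP.1 a c) (sub_nonneg.2 (hf c))
  have hsum : ∑ c, P a c * (M - f c) = 0 := by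
    simp only [mul_sub, Finset.sum_sub_distrib, ← Finset.sum_mul, hP.2 a, one_mul]
    exact sub_eq_zero.2 ha.symm
  have hprod := (Finset.sum_eq_zero_iff_of_nonneg hnonneg).1 hsum c (Finset.mem_univ c)
  exact (sub_eq_zero.1 ((mul_eq_zero.1 hprod).resolve_left hc)).symm

theorem IsIrreducible.eq_univ_of_closed [DecidableEq G] (hirr : IsIrreducible P) {Q : Set G}
    (hQ : Q.Nonempty) (hclosed : ∀ a ∈ Q, ∀ c ∉ Q, P a c = 0) : Q = Set.univ := by
  obtain ⟨a, ha⟩ := hQ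
  have hpow : ∀ (t : ℕ), ∀ c ∉ Q, (P ^ t) a c = 0 := by
    intro t
    induction t with
    | zero => exact fun c hc => Matrix.one_apply_ne fun hac => hc (hac ▸ ha)
    | succ t ih =>
      intro c hc
      rw [pow_succ, Matrix.mul_apply]
      refine Finset.sum_eq_zero fun e _ => ?_
      by_cases he : e ∈ Q
      · rw [hclosed e he c hc, mul_zero]
      · rw [ih e he, zero_mul]
  refine Set.eq_univ_of_forall fun c => by_contra fun hc => ?_
  obtain ⟨t, ht⟩ := hirr a c
  exact ht.ne' (hpow t c hc)

/-- Maximum principle: where the extension of `v` by `0` on `A` attains a positive maximum of `v`,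
so do all its successors; by irreducibility this spreads to `A`, where the extension vanishes. -/
theorem IsReturnSolution.nonpos [DecidableEq G] (hP : IsStochastic P) (hirr : IsIrreducible P)
    (hA : A.Nonempty) (hv : IsReturnSolution P A 0 v) : v ≤ 0 := by
  classical
  obtain ⟨a₀, ha₀⟩ := hA
  have : Nonempty G := ⟨a₀⟩
  obtain ⟨m, hm⟩ := Finite.exists_max v
  by_contra hneg
  have hpos : 0 < v m := by
    obtain ⟨z, hz⟩ := not_forall.1 hneg
    exact (not_le.1 hz).trans_le (hm z)
  let f : G → ℝ := A.piecewise 0 v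
  have hfA : ∀ c ∈ A, f c = 0 := fun c hc => Set.piecewise_eq_of_mem _ _ _ hc
  have hfA' : ∀ c ∉ A, f c = v c := fun c hc => Set.piecewise_eq_of_notMem _ _ _ hc
  have hle : ∀ c, f c ≤ v m := fun c => by
    by_cases hc : c ∈ A
    · exact (hfA c hc).trans_le hpos.le
    · exact (hfA' c hc).trans_le (hm c)
  have hspread : ∀ a, v a = v m → ∀ c, P a c ≠ 0 → f c = v m := fun a ha c =>
    hP.eq_of_mulVec_eq hle ((congrFun hv a).symm.trans ha)
  have huniv : {c | f c = v m} = Set.univ := by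
    refine hirr.eq_univ_of_closed ?_ fun a ha c hc => ?_
    · obtain ⟨c, hc⟩ := hP.exists_ne_zero m
      exact ⟨c, hspread m rfl c hc⟩
    · have haA : a ∉ A := fun haA => hpos.ne ((hfA a haA).symm.trans ha)
      exact by_contra fun hac => hc (hspread a ((hfA' a haA).symm.trans ha) c hac)
  have hmax : f a₀ = v m := huniv.ge (Set.mem_univ a₀)
  exact hpos.ne ((hfA a₀ ha₀).symm.trans hmax)

theorem IsReturnSolution.unique [DecidableEq G] (hP : IsStochastic P) (hirr : IsIrreducible P)
    (hA : A.Nonempty) (hv : IsReturnSolution P A φ v) (hw : IsReturnSolution P A φ w) :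
    v = w := by
  have hle {v w : G → ℝ} (hv : IsReturnSolution P A φ v) (hw : IsReturnSolution P A φ w) :
      v ≤ w := by
    have hsub : IsReturnSolution P A 0 (v + (-1 : ℝ) • w) := by
      simpa using hv.add (hw.smul (-1))
    intro a
    simpa using hsub.nonpos hP hirr hA a
  exact le_antisymm (hle hv hw) (hle hw hv)

theorem IsReturnSolution.to_insert (hv : IsReturnSolution P S φ v) {y : G} (hy : y ∉ S)
    (hφ : φ y = 0) : IsReturnSolution P (insert y S) (φ + v y • Set.indicator {y} 1) v := by
  classical
  refine hv.congr (funext fun c => ?_)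
  rcases eq_or_ne c y with rfl | hcy
  · simp [hy, hφ]
  · by_cases hc : c ∈ S <;> simp [hc, hcy]

theorem IsReturnSolution.of_insert {y : G} (hv : IsReturnSolution P (insert y S) φ v)
    (hvy : v y = φ y) : IsReturnSolution P S φ v := by
  classical
  refine hv.congr (funext fun c => ?_)
  rcases eq_or_ne c y with rfl | hcy
  · by_cases hc : c ∈ S <;> simp [hc, hvy]
  · by_cases hc : c ∈ S <;> simp [hc, hcy]

end DirichletProblem

section PathEvents

variable {G : Type*} {A B : Set G} {ω : ℕ → G}

/-- The path `ω` seen from time `1` on. -/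
def shift (ω : ℕ → G) : ℕ → G := fun n => ω (n + 1)

/-- The event that the first visit to `A`, at a time `≥ 0`, takes place in `B` (meaningful for
`B ⊆ A`). Its preimage under `shift` is the same event for times `≥ 1`. -/
def firstVisitIn (A B : Set G) : Set (ℕ → G) := {ω | ∃ n, ω n ∈ B ∧ ∀ i < n, ω i ∉ A}

theorem mem_firstVisitIn_of_mem (h : ω 0 ∈ A) : ω ∈ firstVisitIn A B ↔ ω 0 ∈ B := by
  refine ⟨?_, fun hB => ⟨0, hB, fun i hi => absurd hi i.not_lt_zero⟩⟩
  rintro ⟨_ | n, hn, hbefore⟩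
  · exact hn
  · exact absurd h (hbefore 0 n.succ_pos)

theorem mem_firstVisitIn_of_notMem (hBA : B ⊆ A) (h : ω 0 ∉ A) :
    ω ∈ firstVisitIn A B ↔ shift ω ∈ firstVisitIn A B := by
  constructor
  · rintro ⟨_ | n, hn, hbefore⟩
    · exact absurd (hBA hn) h
    · exact ⟨n, hn, fun i hi => hbefore (i + 1) (Nat.succ_lt_succ hi)⟩
  · rintro ⟨n, hn, hbefore⟩
    refine ⟨n + 1, hn, fun i hi => ?_⟩
    cases i with
    | zero => exact h
    | succ i => exact hbefore i (Nat.lt_of_succ_lt_succ hi)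

theorem mem_firstVisitIn_union_iff :
    ω ∈ firstVisitIn (A ∪ B) (A \ B) ↔ ∃ n, ω n ∈ A ∧ ∀ i ≤ n, ω i ∉ B := by
  classical
  constructor
  · rintro ⟨n, ⟨hnA, hnB⟩, hbefore⟩
    refine ⟨n, hnA, fun i hi => ?_⟩
    rcases hi.lt_or_eq with hlt | rfl
    · exact fun hiB => hbefore i hlt (Or.inr hiB)
    · exact hnB
  · rintro ⟨n, hnA, hnB⟩
    have hex : ∃ n, ω n ∈ A := ⟨n, hnA⟩
    have hfirst : Nat.find hex ≤ n := Nat.find_min' hex hnA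
    refine ⟨Nat.find hex, ⟨Nat.find_spec hex, hnB _ hfirst⟩, fun i hi => ?_⟩
    exact not_or.2 ⟨Nat.find_min hex hi, hnB i (hi.le.trans hfirst)⟩

theorem coe_le_hit_iff {n : ℕ} : (n : ℕ∞) ≤ hit A ω ↔ ∀ i < n, ω i ∉ A := by
  rw [hit, le_sInf_iff, Set.forall_mem_image]
  simp only [Set.mem_ofPred_eq, Nat.cast_le]
  exact forall_congr' fun i => by rw [← not_lt, imp_not_comm]

theorem coe_lt_hitPlus_iff {n : ℕ} : (n : ℕ∞) < hitPlus A ω ↔ ∀ i < n, shift ω i ∉ A := by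
  rw [← ENat.add_one_le_iff (ENat.natCast_ne_top n), hitPlus, le_sInf_iff, Set.forall_mem_image]
  constructor
  · intro h i hi hiA
    have hle : n + 1 ≤ i + 1 := by exact_mod_cast h ⟨i.succ_pos, hiA⟩
    omega
  · rintro h (_ | i) ⟨hpos, hiA⟩
    · exact absurd hpos (Nat.not_succ_le_zero 0)
    · exact_mod_cast Nat.succ_le_succ (not_lt.1 fun hi => h i hi hiA)

theorem hit_lt_hitPlus_iff :
    hit A ω < hitPlus B ω ↔ ω 0 ∈ A ∨ shift ω ∈ firstVisitIn (A ∪ B) (A \ B) := by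
  rw [mem_firstVisitIn_union_iff, hit, sInf_lt_iff, Set.exists_mem_image]
  simp only [Set.mem_ofPred_eq, coe_lt_hitPlus_iff]
  rw [← Nat.or_exists_add_one]
  simp [shift]

theorem hitsAt_eq_firstVisitIn {x : G} (hx : x ∈ A) : hitsAt A x = firstVisitIn A {x} := by
  ext ω
  refine exists_congr fun n => ?_
  rw [and_comm, Set.mem_singleton_iff]
  refine and_congr_right fun hn => ?_
  have hle : hit A ω ≤ n := sInf_le ⟨n, by simpa [hn] using hx, rfl⟩
  rw [le_antisymm_iff, and_iff_right hle, coe_le_hit_iff]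

end PathEvents

section MarkovChain

variable {G : Type*} [MeasurableSpace G] [MeasurableSingletonClass G]

theorem ext_of_cylinder [Countable G] {μ ν : Measure (ℕ → G)} [IsFiniteMeasure μ]
    (h : ∀ w n, μ (PiNat.cylinder w n) = ν (PiNat.cylinder w n)) : μ = ν := by
  let _ : TopologicalSpace G := ⊥
  have : DiscreteTopology G := ⟨rfl⟩
  have hgen : (MeasurableSpace.pi : MeasurableSpace (ℕ → G)) = MeasurableSpace.generateFrom
      {s | ∃ (w : ℕ → G) (n : ℕ), s = PiNat.cylinder w n} :=
    BorelSpace.measurable_eq.trans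
      (PiNat.isTopologicalBasis_cylinders fun _ => G).borel_eq_generateFrom
  refine ext_of_generate_finite _ hgen ?_ ?_ ?_
  · rintro _ ⟨w, m, rfl⟩ _ ⟨w', n, rfl⟩ ⟨ω, hw, hw'⟩
    rw [← PiNat.mem_cylinder_iff_eq.1 hw, ← PiNat.mem_cylinder_iff_eq.1 hw']
    refine ⟨ω, max m n, Set.ext fun ω' => ?_⟩
    simp [PiNat.mem_cylinder_iff, or_imp, forall_and]
  · rintro _ ⟨w, n, rfl⟩
    exact h w n
  · rcases isEmpty_or_nonempty (ℕ → G) with _ | ⟨⟨w⟩⟩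
    · simp [Set.eq_empty_of_isEmpty]
    · simpa using h w 0

theorem measurable_shift {G : Type*} [MeasurableSpace G] : Measurable (shift : (ℕ → G) → ℕ → G) :=
  measurable_pi_lambda _ fun n => measurable_pi_apply (n + 1)

theorem measurableSet_firstVisitIn [Finite G] (A B : Set G) :
    MeasurableSet (firstVisitIn A B) := by
  have hvisit (n : ℕ) (C : Set G) : MeasurableSet {ω : ℕ → G | ω n ∈ C} :=
    measurable_pi_apply n C.toFinite.measurableSet
  exact measurableSet_setOfPred.2 <| .exists fun n =>
    (measurableSet_setOfPred.1 (hvisit n B)).and <| .forall fun i =>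
      measurable_const.imp (measurableSet_setOfPred.1 (hvisit i A)).not

variable [DecidableEq G] {P : Matrix G G ℝ} {μ : G → Measure (ℕ → G)}

theorem IsMarkovChain.ae_start (hμ : IsMarkovChain P μ) (a : G) : ∀ᵐ ω ∂μ a, ω 0 = a := by
  have := hμ.1 a
  have hstart : MeasurableSet {ω : ℕ → G | ω 0 = a} :=
    (measurableSet_singleton a).preimage (measurable_pi_apply 0)
  refine (prob_compl_eq_zero_iff hstart).2 ?_
  simpa using hμ.2 a 0 fun _ => a

theorem IsMarkovChain.real_congr (hμ : IsMarkovChain P μ) {a : G} {E F : Set (ℕ → G)}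
    (h : ∀ ω, ω 0 = a → (ω ∈ E ↔ ω ∈ F)) : (μ a).real E = (μ a).real F :=
  measureReal_congr <| (hμ.ae_start a).mono fun ω hω => propext (h ω hω)

theorem IsMarkovChain.real_eq_one (hμ : IsMarkovChain P μ) {a : G} {E : Set (ℕ → G)}
    (h : ∀ ω, ω 0 = a → ω ∈ E) : (μ a).real E = 1 := by
  have := hμ.1 a
  rw [hμ.real_congr fun ω hω => iff_of_true (h ω hω) (Set.mem_univ ω), probReal_univ]

theorem IsMarkovChain.real_eq_zero (hμ : IsMarkovChain P μ) {a : G} {E : Set (ℕ → G)}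
    (h : ∀ ω, ω 0 = a → ω ∉ E) : (μ a).real E = 0 := by
  rw [hμ.real_congr fun ω hω => iff_of_false (h ω hω) (Set.notMem_empty ω), measureReal_empty]

theorem IsMarkovChain.measure_preimage_shift_cylinder [Fintype G] (hP : IsStochastic P)
    (hμ : IsMarkovChain P μ) (a : G) (w : ℕ → G) (t : ℕ) :
    μ a (shift ⁻¹' {ω | ∀ i ≤ t, ω i = w i}) =
      ENNReal.ofReal (P a (w 0)) * μ (w 0) {ω | ∀ i ≤ t, ω i = w i} := by
  let w' : ℕ → G := fun n => Nat.casesOn n a w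
  have hcons : μ a (shift ⁻¹' {ω | ∀ i ≤ t, ω i = w i}) = μ a {ω | ∀ i ≤ t + 1, ω i = w' i} := by
    refine measure_congr <| (hμ.ae_start a).mono fun ω hω => propext ⟨fun h i hi => ?_,
      fun h i hi => h (i + 1) (Nat.succ_le_succ hi)⟩
    cases i with
    | zero => exact hω
    | succ i => exact h i (Nat.le_of_succ_le_succ hi)
  rw [hcons, hμ.2, hμ.2, ← ENNReal.ofReal_mul (hP.1 a (w 0)), Finset.prod_range_succ']
  simp [w', mul_comm]

theorem IsMarkovChain.map_shift [Fintype G] (hP : IsStochastic P) (hμ : IsMarkovChain P μ)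
    (a : G) : (μ a).map shift = ∑ c, ENNReal.ofReal (P a c) • μ c := by
  have := hμ.1
  have := Measure.isProbabilityMeasure_map (μ := μ a) measurable_shift.aemeasurable
  refine ext_of_cylinder fun w n => ?_
  rw [Measure.finsetSum_apply]
  simp only [Measure.smul_apply, smul_eq_mul]
  cases n with
  | zero =>
    simp only [PiNat.cylinder_zero, measure_univ, mul_one]
    rw [← ENNReal.ofReal_sum_of_nonneg fun c _ => hP.1 a c, hP.2 a, ENNReal.ofReal_one]
  | succ t =>
    have hcyl : PiNat.cylinder w (t + 1) = {ω | ∀ i ≤ t, ω i = w i} := by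
      ext ω
      simp [PiNat.mem_cylinder_iff]
    have hmeas : MeasurableSet (PiNat.cylinder w (t + 1)) := by
      rw [PiNat.cylinder_eq_pi]
      exact .pi (Set.to_countable _) fun i _ => measurableSet_singleton (w i)
    rw [Measure.map_apply measurable_shift hmeas, hcyl,
      hμ.measure_preimage_shift_cylinder hP, Finset.sum_eq_single (w 0)]
    · intro c _ hc
      simp [hμ.2, hc.symm]
    · simp

theorem IsMarkovChain.real_preimage_shift [Fintype G] (hP : IsStochastic P)
    (hμ : IsMarkovChain P μ) (a : G) {E : Set (ℕ → G)} (hE : MeasurableSet E) :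
    (μ a).real (shift ⁻¹' E) = ∑ c, P a c * (μ c).real E := by
  have := hμ.1
  rw [← map_measureReal_apply measurable_shift hE, hμ.map_shift hP,
    measureReal_def, Measure.finsetSum_apply, ENNReal.toReal_sum]
  · simp [measureReal_def, hP.1]
  · simp [ENNReal.mul_ne_top]

end MarkovChain

section ReturnProbabilities

variable {G : Type*} [MeasurableSpace G]

/-- `Pr_a[X_T ∈ B]` with `T = T_A^+`, for `B ⊆ A`: the probability that the first return to `A`
takes place in `B`. -/
noncomputable def returnProb (μ : G → Measure (ℕ → G)) (A B : Set G) (a : G) : ℝ :=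
  (μ a).real (shift ⁻¹' firstVisitIn A B)

theorem returnProb_empty (μ : G → Measure (ℕ → G)) (A : Set G) : returnProb μ A ∅ = 0 := by
  ext a
  simp [returnProb, firstVisitIn]

variable [DecidableEq G] [MeasurableSingletonClass G] {P : Matrix G G ℝ}
  {μ : G → Measure (ℕ → G)} {A B S : Set G} {x y : G}

open Classical in
theorem IsMarkovChain.real_firstVisitIn (hμ : IsMarkovChain P μ) (hBA : B ⊆ A) (a : G) :
    (μ a).real (firstVisitIn A B) = A.piecewise (B.indicator 1) (returnProb μ A B) a := by
  by_cases haA : a ∈ A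
  · rw [Set.piecewise_eq_of_mem _ _ _ haA]
    by_cases haB : a ∈ B
    · rw [Set.indicator_of_mem haB, Pi.one_apply]
      refine hμ.real_eq_one ?_
      rintro ω rfl
      exact (mem_firstVisitIn_of_mem haA).2 haB
    · rw [Set.indicator_of_notMem haB]
      refine hμ.real_eq_zero ?_
      rintro ω rfl
      exact mt (mem_firstVisitIn_of_mem haA).1 haB
  · rw [Set.piecewise_eq_of_notMem _ _ _ haA]
    refine hμ.real_congr ?_
    rintro ω rfl
    exact mem_firstVisitIn_of_notMem hBA haA

theorem IsMarkovChain.harm_of_mem (hμ : IsMarkovChain P μ) (hx : x ∈ S) (hy : y ∈ S) :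
    harm μ S y x = Set.indicator {x} 1 y := by
  classical
  rw [harm, hitsAt_eq_firstVisitIn hx]
  exact (hμ.real_firstVisitIn (Set.singleton_subset_iff.2 hx) y).trans
    (Set.piecewise_eq_of_mem _ _ _ hy)

theorem IsMarkovChain.harm_of_notMem (hμ : IsMarkovChain P μ) (hx : x ∈ S) (hy : y ∉ S) :
    harm μ S y x = returnProb μ S {x} y := by
  classical
  rw [harm, hitsAt_eq_firstVisitIn hx]
  exact (hμ.real_firstVisitIn (Set.singleton_subset_iff.2 hx) y).trans
    (Set.piecewise_eq_of_notMem _ _ _ hy)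

theorem IsMarkovChain.real_hit_lt_hitPlus_of_mem (hμ : IsMarkovChain P μ) (hx : x ∈ A) :
    (μ x).real {ω | hit A ω < hitPlus B ω} = 1 := by
  refine hμ.real_eq_one ?_
  rintro ω rfl
  exact hit_lt_hitPlus_iff.2 (Or.inl hx)

theorem IsMarkovChain.real_hit_lt_hitPlus_of_notMem (hμ : IsMarkovChain P μ) (hx : x ∉ A) :
    (μ x).real {ω | hit A ω < hitPlus B ω} = returnProb μ (A ∪ B) (A \ B) x := by
  refine hμ.real_congr ?_
  rintro ω rfl
  exact hit_lt_hitPlus_iff.trans (or_iff_right hx)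

variable [Fintype G]

theorem IsMarkovChain.isReturnSolution_returnProb (hμ : IsMarkovChain P μ) (hP : IsStochastic P)
    (hBA : B ⊆ A) : IsReturnSolution P A (B.indicator 1) (returnProb μ A B) := by
  ext a
  rw [returnProb, hμ.real_preimage_shift hP a (measurableSet_firstVisitIn A B)]
  exact Finset.sum_congr rfl fun c _ => by rw [hμ.real_firstVisitIn hBA]

theorem IsMarkovChain.returnProb_self (hμ : IsMarkovChain P μ) (hP : IsStochastic P)
    (hirr : IsIrreducible P) (hA : A.Nonempty) : returnProb μ A A = 1 := by
  refine ((hμ.isReturnSolution_returnProb hP subset_rfl).congr ?_).unique hP hirr hA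
    (hP.isReturnSolution_one A)
  ext c
  by_cases hc : c ∈ A <;> simp [hc]

theorem IsMarkovChain.returnProb_eq_add_smul (hμ : IsMarkovChain P μ) (hP : IsStochastic P)
    (hirr : IsIrreducible P) (hBS : B ⊆ S) (hy : y ∉ S) :
    returnProb μ S B =
      returnProb μ (insert y S) B + returnProb μ S B y • returnProb μ (insert y S) {y} := by
  have hyB : B.indicator (1 : G → ℝ) y = 0 := Set.indicator_of_notMem (fun h => hy (hBS h)) _
  have hleft := (hμ.isReturnSolution_returnProb hP hBS).to_insert hy hyB
  have hdirect := hμ.isReturnSolution_returnProb hP (hBS.trans (Set.subset_insert y S))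
  have hvia := hμ.isReturnSolution_returnProb hP
    (Set.singleton_subset_iff.2 (Set.mem_insert y S))
  exact hleft.unique hP hirr (Set.insert_nonempty y S) (hdirect.add (hvia.smul _))

theorem IsMarkovChain.returnProb_insert_eq_one_sub (hμ : IsMarkovChain P μ) (hP : IsStochastic P)
    (hirr : IsIrreducible P) (hS : S.Nonempty) (hy : y ∉ S) :
    returnProb μ (insert y S) S y = 1 - returnProb μ (insert y S) {y} y := by
  have hdecomp := congrFun (hμ.returnProb_eq_add_smul hP hirr subset_rfl hy) y
  simp only [hμ.returnProb_self hP hirr hS, Pi.add_apply, Pi.smul_apply, Pi.one_apply,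
    smul_eq_mul, one_mul] at hdecomp
  exact eq_sub_of_add_eq hdecomp.symm

theorem IsMarkovChain.returnProb_mul_returnProb_insert (hμ : IsMarkovChain P μ)
    (hP : IsStochastic P) (hirr : IsIrreducible P) (hBS : B ⊆ S) (hS : S.Nonempty) (hy : y ∉ S) :
    returnProb μ S B y * returnProb μ (insert y S) S y = returnProb μ (insert y S) B y := by
  have hdecomp := congrFun (hμ.returnProb_eq_add_smul hP hirr hBS hy) y
  simp only [Pi.add_apply, Pi.smul_apply, smul_eq_mul] at hdecomp
  rw [hμ.returnProb_insert_eq_one_sub hP hirr hS hy]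
  linear_combination hdecomp

theorem IsMarkovChain.returnProb_insert_ne_zero (hμ : IsMarkovChain P μ) (hP : IsStochastic P)
    (hirr : IsIrreducible P) (hS : S.Nonempty) (hy : y ∉ S) :
    returnProb μ (insert y S) S y ≠ 0 := by
  intro hzero
  have hsol : IsReturnSolution P S (S.indicator 1) (returnProb μ (insert y S) S) :=
    (hμ.isReturnSolution_returnProb hP (Set.subset_insert y S)).of_insert (by simp [hzero, hy])
  have hone := hsol.unique hP hirr hS (hμ.isReturnSolution_returnProb hP subset_rfl)
  rw [hone, hμ.returnProb_self hP hirr hS] at hzero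
  exact one_ne_zero hzero

theorem IsMarkovChain.mul_returnProb_comm {pi : G → ℝ} (hμ : IsMarkovChain P μ)
    (hP : IsStochastic P) (hrev : ∀ x y, pi x * P x y = pi y * P y x) (hx : x ∈ A) (hy : y ∈ A) :
    pi x * returnProb μ A {y} x = pi y * returnProb μ A {x} y := by
  classical
  have hxA : {x} ⊆ A := Set.singleton_subset_iff.2 hx
  have hyA : {y} ⊆ A := Set.singleton_subset_iff.2 hy
  have hgreen := (hμ.isReturnSolution_returnProb hP hxA).green_identity hrev
    (hμ.isReturnSolution_returnProb hP hyA)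
  simp only [Set.indicator_indicator, Set.inter_eq_self_of_subset_right hxA,
    Set.inter_eq_self_of_subset_right hyA] at hgreen
  simpa [Set.indicator_apply] using hgreen

end ReturnProbabilities

theorem stmt4_general {G : Type*} [Fintype G] [DecidableEq G] [MeasurableSpace G]
    [MeasurableSingletonClass G] (P : Matrix G G ℝ) (pi : G → ℝ) (μ : G → Measure (ℕ → G))
    (hP : IsStochastic P) (hirr : IsIrreducible P)
    (hrev : ∀ x y, pi x * P x y = pi y * P y x) (hμ : IsMarkovChain P μ)
    (S : Set G) (x : G) (hx : x ∈ S) (y : G) :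
    pi y * harm μ S y x
      = pi x * (μ x {ω | hit {y} ω < hitPlus S ω}).toReal
          / (μ y {ω | hit S ω < hitPlus {y} ω}).toReal := by
  rw [← measureReal_def, ← measureReal_def]
  by_cases hy : y ∈ S
  · rw [hμ.harm_of_mem hx hy, hμ.real_hit_lt_hitPlus_of_mem hy, div_one]
    rcases eq_or_ne y x with rfl | hyx
    · simp [hμ.real_hit_lt_hitPlus_of_mem (Set.mem_singleton y)]
    · rw [hμ.real_hit_lt_hitPlus_of_notMem (by simpa using hyx.symm),
        Set.sdiff_eq_empty.2 (Set.singleton_subset_iff.2 hy), returnProb_empty]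
      simp [hyx]
  · have hxy : x ∉ ({y} : Set G) := ne_of_mem_of_not_mem hx hy
    rw [hμ.harm_of_notMem hx hy, hμ.real_hit_lt_hitPlus_of_notMem hxy,
      hμ.real_hit_lt_hitPlus_of_notMem hy, Set.union_singleton, Set.singleton_union,
      Set.sdiff_singleton_eq_self hy, (Set.disjoint_singleton_left.2 hy).sdiff_eq_left,
      eq_div_iff (hμ.returnProb_insert_ne_zero hP hirr ⟨x, hx⟩ hy), mul_assoc,
      hμ.returnProb_mul_returnProb_insert hP hirr (Set.singleton_subset_iff.2 hx) ⟨x, hx⟩ hy]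
    exact hμ.mul_returnProb_comm hP hrev (Set.mem_insert y S) (Set.mem_insert_of_mem y hx)

/-- For `x ∈ S` and any `y ∈ G`,
`π(y)·h_{y,S}(x) = π(x)·Pr_x[T_y < T_S^+] / Pr_y[T_S < T_y^+]`. -/
theorem stmt4 {G : Type*} [Fintype G] [DecidableEq G] [MeasurableSpace G] [MeasurableSingletonClass G]
    (P : Matrix G G ℝ) (pi : G → ℝ) (μ : G → Measure (ℕ → G))
    (hP : IsStochastic P) (hirr : IsIrreducible P) (hap : IsAperiodic P)
    (hrev : IsReversible P pi) (hμ : IsMarkovChain P μ)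
    (S : Set G) (hS : S.Nonempty) (x : G) (hx : x ∈ S) (y : G) :
    pi y * harm μ S y x
      = pi x * (μ x {ω | hit {y} ω < hitPlus S ω}).toReal
          / (μ y {ω | hit S ω < hitPlus {y} ω}).toReal :=
  stmt4_general P pi μ hP hirr hrev.2.2 hμ S x hx y

end HM
end

section
/- For any nonempty set S ⊆ G and any x ∈ G, the expected return time to S satisfies E_x[T_S^+] ≤ (3/(1−λ)) · max( log(2e/π_min), 1/π(S) ). -/
open MeasureTheory Finset
open scoped ENNReal

namespace HM

variable {G : Type*} [Fintype G] [DecidableEq G]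

variable [MeasurableSpace G]

/-!
The spectral gap controls the chain twice. First, `|P ^ k x y - π y| ≤ π y` as soon as
`lam ^ k ≤ π_min`, which takes about `log (e / π_min) / (1 - λ)` steps; after these `k` steps the
law of the chain is at most `2 π`, so `E_x[T_S^+]` exceeds `k` by at most twice the mean of the
hitting time of `S` under `π`. Second, the expected hitting time `h x = E_x[T_S]` vanishes on `S`
and satisfies `h - P h = 1` off `S`. For functions vanishing on `S` the Poincaré inequality improves
to `(1 - λ) π(S) ⟨h, h⟩ ≤ ⟨h, h - P h⟩`, and the right side is the mean of `h`, so Cauchy–Schwarz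
bounds this mean by `1 / ((1 - λ) π(S))`. Truncating `h` at a finite time costs only
`h - P h ≤ 1` in place of equality, and spares proving that `T_S^+` is almost surely finite.
-/

section TailSum

theorem toENNReal_eq_tsum_indicator (m : ℕ∞) :
    (m : ℝ≥0∞) = ∑' n : ℕ, {n : ℕ | (n : ℕ∞) < m}.indicator (fun _ ↦ 1) n := by
  rw [← _root_.tsum_subtype, ENNReal.tsum_set_one]
  congr 1
  cases m with
  | top => simp
  | coe m => simpa [Set.Iio_def] using (Set.encard_coe_eq_coe_finsetCard (Finset.Iio m)).symm

theorem lintegral_toENNReal_eq_tsum_measure {Ω : Type*} [MeasurableSpace Ω] {μ : Measure Ω}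
    {T : Ω → ℕ∞} (hT : ∀ n : ℕ, MeasurableSet {ω | (n : ℕ∞) < T ω}) :
    ∫⁻ ω, (T ω : ℝ≥0∞) ∂μ = ∑' n : ℕ, μ {ω | (n : ℕ∞) < T ω} := by
  calc ∫⁻ ω, (T ω : ℝ≥0∞) ∂μ
      = ∫⁻ ω, ∑' n : ℕ, {ω | (n : ℕ∞) < T ω}.indicator (fun _ ↦ 1) ω ∂μ :=
        lintegral_congr fun ω ↦ toENNReal_eq_tsum_indicator (T ω)
    _ = ∑' n : ℕ, ∫⁻ ω, {ω | (n : ℕ∞) < T ω}.indicator (fun _ ↦ 1) ω ∂μ :=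
        lintegral_tsum fun n ↦ (measurable_const.indicator (hT n)).aemeasurable
    _ = ∑' n : ℕ, μ {ω | (n : ℕ∞) < T ω} :=
        tsum_congr fun n ↦ lintegral_indicator_one (hT n)

end TailSum

section SelfAdjoint

theorem apply_self_le_sq_mul_of_abs_le {M : Type*} [AddCommGroup M] [Module ℝ M]
    {B : LinearMap.BilinForm ℝ M} (hsymm : B.IsSymm) (hpos : ∀ f, 0 ≤ B f f) {T : M →ₗ[ℝ] M}
    (hT : ∀ f g, B (T f) g = B f (T g)) {W : Submodule ℝ M} (hW : ∀ f ∈ W, T f ∈ W) {c : ℝ}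
    (hc : ∀ f ∈ W, |B f (T f)| ≤ c * B f f) {f : M} (hf : f ∈ W) :
    B (T f) (T f) ≤ c ^ 2 * B f f := by
  -- Polarize: the bound at `f ± s • T f` makes a quadratic polynomial in `s` nonnegative.
  set g := T f with hg
  have hgW : g ∈ W := hW f hf
  have hquad (s : ℝ) : 0 ≤ c * B g g * (s * s) + -(2 * B g g) * s + c * B f f := by
    have hadd := (abs_le.1 (hc _ (W.add_mem hf (W.smul_mem s hgW)))).2
    have hsub := (abs_le.1 (hc _ (W.sub_mem hf (W.smul_mem s hgW)))).1
    have hcross : B f (T g) = B g g := by rw [← hT]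
    simp only [map_add, map_sub, map_smul, LinearMap.add_apply, LinearMap.sub_apply,
      LinearMap.smul_apply, smul_eq_mul, ← hg, hcross, hsymm.eq g f] at hadd hsub
    linarith
  have hdiscrim := discrim_le_zero hquad
  rw [discrim] at hdiscrim
  rcases (hpos g).eq_or_lt with h0 | h0
  · rw [← h0]
    exact mul_nonneg (sq_nonneg c) (hpos f)
  · refine le_of_mul_le_mul_left ?_ h0
    linarith

end SelfAdjoint

section L2Form

variable {V : Type*} [Fintype V] {w f : V → ℝ}

/-- The inner product `⟨f, g⟩_w = ∑ x, w x * f x * g x` of `ℓ²(w)`, as a bilinear form. For a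
probability vector `w`, the mean of `f` is `l2Form w 1 f`. -/
def l2Form (w : V → ℝ) : LinearMap.BilinForm ℝ (V → ℝ) :=
  (LinearMap.mul ℝ (V → ℝ)).compr₂ (dotProductBilin ℝ ℝ w)

theorem l2Form_apply (w f g : V → ℝ) : l2Form w f g = ∑ x, w x * (f x * g x) := rfl

theorem l2Form_isSymm (w : V → ℝ) : (l2Form w).IsSymm :=
  ⟨fun f g ↦ by simp only [l2Form_apply, mul_comm (f _)]⟩

theorem l2Form_single_left [DecidableEq V] (w f : V → ℝ) (y : V) :
    l2Form w (Pi.single y 1) f = w y * f y := by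
  simp [l2Form_apply, Pi.single_apply]

theorem l2Form_self_nonneg (hw : 0 ≤ w) (f : V → ℝ) : 0 ≤ l2Form w f f :=
  sum_nonneg fun x _ ↦ mul_nonneg (hw x) (mul_self_nonneg (f x))

theorem mul_sq_le_l2Form_self (hw : 0 ≤ w) (f : V → ℝ) (x : V) : w x * f x ^ 2 ≤ l2Form w f f := by
  rw [sq]
  exact single_le_sum (f := fun x ↦ w x * (f x * f x))
    (fun y _ ↦ mul_nonneg (hw y) (mul_self_nonneg (f y))) (mem_univ x)

theorem eq_zero_of_l2Form_self_eq_zero (hw : ∀ x, 0 < w x) (hf : l2Form w f f = 0) : f = 0 := by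
  ext x
  have hx : w x * f x ^ 2 ≤ 0 := (mul_sq_le_l2Form_self (fun y ↦ (hw y).le) f x).trans_eq hf
  exact pow_eq_zero_iff two_ne_zero |>.1
    (le_antisymm (nonpos_of_mul_nonpos_right hx (hw x)) (sq_nonneg _))

theorem sq_l2Form_le (hw : 0 ≤ w) (f g : V → ℝ) :
    l2Form w f g ^ 2 ≤ l2Form w f f * l2Form w g g :=
  LinearMap.BilinForm.apply_sq_le_of_symm _ (l2Form_self_nonneg hw)
    (LinearMap.BilinForm.isSymm_iff.1 (l2Form_isSymm w)) f g

/-- The unit sphere of the hyperplane of mean-zero functions in `ℓ²(w)`, on which `lam` is a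
supremum. -/
def meanZeroSphere (w : V → ℝ) : Set (V → ℝ) :=
  {f | l2Form w 1 f = 0 ∧ l2Form w f f = 1}

theorem isCompact_meanZeroSphere (hw : ∀ x, 0 < w x) : IsCompact (meanZeroSphere w) := by
  refine Metric.isCompact_of_isClosed_isBounded ?_ ?_
  · simp only [meanZeroSphere, l2Form_apply]
    exact (isClosed_eq (by fun_prop) continuous_const).inter
      (isClosed_eq (by fun_prop) continuous_const)
  · refine (Bornology.IsBounded.pi fun x ↦ Metric.isBounded_Icc (-√(1 / w x)) √(1 / w x)).subset
      fun f hf x _ ↦ abs_le.1 (Real.abs_le_sqrt ?_)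
    rw [le_div_iff₀' (hw x), ← hf.2]
    exact mul_sq_le_l2Form_self (fun y ↦ (hw y).le) f x

end L2Form

section PiMin

variable {V : Type*} [Finite V] {π : V → ℝ}

theorem pimin_le (π : V → ℝ) (x : V) : pimin π ≤ π x :=
  ciInf_le (Set.finite_range π).bddBelow x

theorem pimin_pos [Nonempty V] (hπ : ∀ x, 0 < π x) : 0 < pimin π := by
  obtain ⟨x, hx⟩ := exists_eq_ciInf_of_finite (f := π)
  exact (hπ x).trans_eq hx

end PiMin

section Spectral

open scoped Matrix

variable {V : Type*} [Fintype V] {P : Matrix V V ℝ} {π f : V → ℝ}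

theorem IsStochastic.mulVec_one (hP : IsStochastic P) : P *ᵥ 1 = 1 := by
  ext x
  simpa [Matrix.mulVec, dotProduct] using hP.2 x

theorem IsStochastic.mulVec_mono (hP : IsStochastic P) : Monotone (P *ᵥ ·) :=
  fun _ _ h x ↦ sum_le_sum fun y _ ↦ mul_le_mul_of_nonneg_left (h y) (hP.1 x y)

theorem IsStochastic.pow [DecidableEq V] (hP : IsStochastic P) (k : ℕ) : IsStochastic (P ^ k) :=
  Matrix.mem_rowStochastic_iff_sum.1 (pow_mem (Matrix.mem_rowStochastic_iff_sum.2 hP) k)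

theorem IsReversible.nonneg (hrev : IsReversible P π) : 0 ≤ π := fun x ↦ (hrev.1 x).le

theorem IsReversible.le_one (hrev : IsReversible P π) (x : V) : π x ≤ 1 :=
  hrev.2.1 ▸ single_le_sum (fun y _ ↦ hrev.nonneg y) (mem_univ x)

theorem IsReversible.l2Form_one_one (hrev : IsReversible P π) : l2Form π 1 1 = 1 := by
  simpa [l2Form_apply] using hrev.2.1

theorem IsReversible.l2Form_mulVec_left (hrev : IsReversible P π) (f g : V → ℝ) :
    l2Form π (P *ᵥ f) g = l2Form π f (P *ᵥ g) := by
  simp only [l2Form_apply, Matrix.mulVec, dotProduct, mul_sum, sum_mul]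
  rw [sum_comm]
  refine sum_congr rfl fun y _ ↦ sum_congr rfl fun x _ ↦ ?_
  linear_combination (f y * g x) * hrev.2.2 x y

theorem IsReversible.l2Form_one_mulVec (hP : IsStochastic P) (hrev : IsReversible P π)
    (f : V → ℝ) : l2Form π 1 (P *ᵥ f) = l2Form π 1 f := by
  rw [← hrev.l2Form_mulVec_left, hP.mulVec_one]

theorem lam_eq_sSup_image (P : Matrix V V ℝ) (π : V → ℝ) :
    lam P π = sSup ((fun f ↦ |l2Form π f (P *ᵥ f)|) '' meanZeroSphere π) := by
  simp only [lam, meanZeroSphere, l2Form_apply, Set.image, Set.mem_ofPred_eq, Pi.one_apply, one_mul,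
    sq, and_assoc, eq_comm (a := |_|), Matrix.mulVec, dotProduct]

theorem lam_nonneg (P : Matrix V V ℝ) (π : V → ℝ) : 0 ≤ lam P π := by
  rw [lam_eq_sSup_image]
  exact Real.sSup_nonneg (Set.forall_mem_image.2 fun f _ ↦ abs_nonneg _)

theorem continuous_abs_l2Form_mulVec (P : Matrix V V ℝ) (π : V → ℝ) :
    Continuous fun f : V → ℝ ↦ |l2Form π f (P *ᵥ f)| := by
  simp only [l2Form_apply, Matrix.mulVec, dotProduct]
  fun_prop

theorem exists_abs_l2Form_mulVec_eq_lam (hπ : ∀ x, 0 < π x) (hne : (meanZeroSphere π).Nonempty) :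
    ∃ f ∈ meanZeroSphere π, |l2Form π f (P *ᵥ f)| = lam P π := by
  obtain ⟨f, hf, hmax⟩ := (isCompact_meanZeroSphere hπ).exists_sSup_image_eq hne
    (continuous_abs_l2Form_mulVec P π).continuousOn
  exact ⟨f, hf, by rw [lam_eq_sSup_image, hmax]⟩

theorem abs_l2Form_mulVec_le_lam_mul (hπ : ∀ x, 0 < π x) (hf : l2Form π 1 f = 0) :
    |l2Form π f (P *ᵥ f)| ≤ lam P π * l2Form π f f := by
  rcases (l2Form_self_nonneg (fun x ↦ (hπ x).le) f).eq_or_lt with h0 | h0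
  · simp [eq_zero_of_l2Form_self_eq_zero hπ h0.symm]
  set c := (√(l2Form π f f))⁻¹
  have hc : c ^ 2 = (l2Form π f f)⁻¹ := by rw [inv_pow, Real.sq_sqrt h0.le]
  have hmem : c • f ∈ meanZeroSphere π := by
    refine ⟨by simp [hf], ?_⟩
    simp only [map_smul, LinearMap.smul_apply, smul_eq_mul]
    rw [← mul_assoc, ← sq, hc, inv_mul_cancel₀ h0.ne']
  have hle : |l2Form π (c • f) (P *ᵥ (c • f))| ≤ lam P π := by
    rw [lam_eq_sSup_image]
    exact le_csSup ((isCompact_meanZeroSphere hπ).image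
      (continuous_abs_l2Form_mulVec P π)).bddAbove ⟨_, hmem, rfl⟩
  simp only [Matrix.mulVec_smul, map_smul, LinearMap.smul_apply, smul_eq_mul] at hle
  rwa [← mul_assoc, ← sq, hc, abs_mul, abs_of_pos (inv_pos.2 h0), inv_mul_le_iff₀' h0] at hle

theorem IsReversible.sum_mul_sub_mul_sq (hP : IsStochastic P) (hrev : IsReversible P π)
    (f : V → ℝ) (e : ℝ) :
    ∑ x, ∑ y, π x * P x y * (f x - e * f y) ^ 2 =
      (1 + e ^ 2) * l2Form π f f - 2 * e * l2Form π f (P *ᵥ f) := by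
  have hfst : ∑ x, ∑ y, π x * P x y * (f x * f x) = l2Form π f f := by
    refine sum_congr rfl fun x _ ↦ ?_
    rw [← sum_mul, ← mul_sum, hP.2 x, mul_one]
    rfl
  have hsnd : ∑ x, ∑ y, π x * P x y * (f y * f y) = l2Form π f f := by
    rw [sum_comm, ← hfst]
    exact sum_congr rfl fun x _ ↦ sum_congr rfl fun y _ ↦ by rw [hrev.2.2 y x]
  have hcross : ∑ x, ∑ y, π x * P x y * (f x * f y) = l2Form π f (P *ᵥ f) := by
    simp only [l2Form_apply, Matrix.mulVec, dotProduct, mul_sum]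
    exact sum_congr rfl fun x _ ↦ sum_congr rfl fun y _ ↦ by ring
  have hexpand (x y : V) : π x * P x y * (f x - e * f y) ^ 2 = π x * P x y * (f x * f x)
      + e ^ 2 * (π x * P x y * (f y * f y)) - 2 * e * (π x * P x y * (f x * f y)) := by ring
  simp only [hexpand, sum_add_distrib, sum_sub_distrib, ← mul_sum, hfst, hsnd, hcross]
  ring

theorem IsReversible.eq_mul_of_l2Form_le (hP : IsStochastic P) (hrev : IsReversible P π) {e : ℝ}
    (he : e ^ 2 = 1) (hf : l2Form π f f ≤ e * l2Form π f (P *ᵥ f)) {x y : V} (hxy : 0 < P x y) :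
    f x = e * f y := by
  have hterm (x y : V) : 0 ≤ π x * P x y * (f x - e * f y) ^ 2 :=
    mul_nonneg (mul_nonneg (hrev.nonneg x) (hP.1 x y)) (sq_nonneg _)
  have hsum : ∑ x, ∑ y, π x * P x y * (f x - e * f y) ^ 2 ≤ 0 := by
    rw [hrev.sum_mul_sub_mul_sq hP, he]
    linarith
  have hzero : π x * P x y * (f x - e * f y) ^ 2 ≤ 0 :=
    calc π x * P x y * (f x - e * f y) ^ 2
        ≤ ∑ y, π x * P x y * (f x - e * f y) ^ 2 :=
          single_le_sum (fun y _ ↦ hterm x y) (mem_univ y)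
      _ ≤ ∑ x, ∑ y, π x * P x y * (f x - e * f y) ^ 2 :=
          single_le_sum (f := fun x ↦ ∑ y, π x * P x y * (f x - e * f y) ^ 2)
            (fun x _ ↦ sum_nonneg fun y _ ↦ hterm x y) (mem_univ x)
      _ ≤ 0 := hsum
  have hsq : (f x - e * f y) ^ 2 ≤ 0 :=
    nonpos_of_mul_nonpos_right hzero (mul_pos (hrev.1 x) hxy)
  exact sub_eq_zero.1 (pow_eq_zero_iff two_ne_zero |>.1 (le_antisymm hsq (sq_nonneg _)))

theorem IsStochastic.eq_pow_mul_of_pow_apply_pos [DecidableEq V] (hP : IsStochastic P) {e : ℝ}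
    (hf : ∀ ⦃x y⦄, 0 < P x y → f x = e * f y) (t : ℕ) {x y : V} (hxy : 0 < (P ^ t) x y) :
    f x = e ^ t * f y := by
  induction t generalizing y with
  | zero =>
    rcases eq_or_ne x y with rfl | hne
    · simp
    · simp [hne] at hxy
  | succ t ih =>
    rw [pow_succ, Matrix.mul_apply] at hxy
    obtain ⟨z, hz⟩ : ∃ z, 0 < (P ^ t) x z * P z y := by
      by_contra! hle
      exact hxy.not_ge (sum_nonpos fun z _ ↦ hle z)
    have hzy : 0 < P z y := (hP.1 z y).lt_of_ne' (right_ne_zero_of_mul hz.ne')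
    rw [ih ((pos_iff_pos_of_mul_pos hz).2 hzy), hf hzy]
    ring

theorem IsReversible.eq_zero_of_l2Form_le [DecidableEq V] (hP : IsStochastic P)
    (hirr : IsIrreducible P) (hrev : IsReversible P π) (hmean : l2Form π 1 f = 0)
    (hf : l2Form π f f ≤ l2Form π f (P *ᵥ f)) : f = 0 := by
  ext x
  have hconst (y : V) : f y = f x := by
    obtain ⟨t, ht⟩ := hirr y x
    have hedge : ∀ ⦃u v⦄, 0 < P u v → f u = 1 * f v :=
      fun u v ↦ hrev.eq_mul_of_l2Form_le hP (one_pow 2) (by rwa [one_mul])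
    simpa using hP.eq_pow_mul_of_pow_apply_pos hedge t ht
  simpa [l2Form_apply, hconst, ← sum_mul, hrev.2.1] using hmean

theorem IsReversible.eq_zero_of_l2Form_le_neg [DecidableEq V] (hP : IsStochastic P)
    (hap : IsAperiodic P) (hrev : IsReversible P π)
    (hf : l2Form π f f ≤ -l2Form π f (P *ᵥ f)) : f = 0 := by
  ext x
  have hedge : ∀ ⦃u v⦄, 0 < P u v → f u = -1 * f v :=
    fun u v ↦ hrev.eq_mul_of_l2Form_le hP (by norm_num) (by rwa [neg_one_mul])
  by_contra hx
  have heven (t : ℕ) (ht : 0 < (P ^ t) x x) : 2 ∣ t := by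
    have hsign := hP.eq_pow_mul_of_pow_apply_pos hedge t ht
    rcases t.even_or_odd with h | h
    · exact h.two_dvd
    · rw [h.neg_one_pow, neg_one_mul, self_eq_neg] at hsign
      exact absurd hsign hx
  exact absurd (hap x 2 heven) (by norm_num)

theorem IsReversible.lam_lt_one [DecidableEq V] (hP : IsStochastic P) (hirr : IsIrreducible P)
    (hap : IsAperiodic P) (hrev : IsReversible P π) : lam P π < 1 := by
  rcases (meanZeroSphere π).eq_empty_or_nonempty with hempty | hne
  · simp [lam_eq_sSup_image, hempty]
  obtain ⟨f, ⟨hmean, hnorm⟩, hmax⟩ := exists_abs_l2Form_mulVec_eq_lam (P := P) hrev.1 hne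
  have hf : f ≠ 0 := by
    rintro rfl
    simp at hnorm
  rw [← hmax]
  by_contra! hge
  rcases le_abs.1 hge with h | h
  · exact hf (hrev.eq_zero_of_l2Form_le hP hirr hmean (hnorm.trans_le h))
  · exact hf (hrev.eq_zero_of_l2Form_le_neg hP hap (hnorm.trans_le h))

end Spectral

section Mixing

open scoped Matrix

variable {V : Type*} [Fintype V] {P : Matrix V V ℝ} {π f : V → ℝ}

theorem IsReversible.l2Form_mulVec_self_le (hP : IsStochastic P) (hrev : IsReversible P π)
    (hf : l2Form π 1 f = 0) :
    l2Form π (P *ᵥ f) (P *ᵥ f) ≤ lam P π ^ 2 * l2Form π f f :=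
  apply_self_le_sq_mul_of_abs_le (l2Form_isSymm π) (l2Form_self_nonneg hrev.nonneg)
    (T := P.mulVecLin) (W := LinearMap.ker (l2Form π 1)) hrev.l2Form_mulVec_left
    (fun g hg ↦ (hrev.l2Form_one_mulVec hP g).trans hg)
    (fun _ hg ↦ abs_l2Form_mulVec_le_lam_mul hrev.1 hg) hf

variable [DecidableEq V]

theorem IsReversible.l2Form_pow_mulVec_self_le (hP : IsStochastic P) (hrev : IsReversible P π)
    (hf : l2Form π 1 f = 0) (k : ℕ) :
    l2Form π (P ^ k *ᵥ f) (P ^ k *ᵥ f) ≤ (lam P π ^ k) ^ 2 * l2Form π f f := by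
  induction k generalizing f with
  | zero => simp
  | succ k ih =>
    calc l2Form π (P ^ (k + 1) *ᵥ f) (P ^ (k + 1) *ᵥ f)
        = l2Form π (P ^ k *ᵥ (P *ᵥ f)) (P ^ k *ᵥ (P *ᵥ f)) := by
          rw [Matrix.mulVec_mulVec, ← pow_succ]
      _ ≤ (lam P π ^ k) ^ 2 * l2Form π (P *ᵥ f) (P *ᵥ f) :=
          ih ((hrev.l2Form_one_mulVec hP f).trans hf)
      _ ≤ (lam P π ^ k) ^ 2 * (lam P π ^ 2 * l2Form π f f) := by
          gcongr
          exact hrev.l2Form_mulVec_self_le hP hf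
      _ = (lam P π ^ (k + 1)) ^ 2 * l2Form π f f := by ring

theorem IsReversible.mul_sq_pow_apply_sub_le (hP : IsStochastic P) (hrev : IsReversible P π)
    (k : ℕ) (x y : V) :
    π x * ((P ^ k) x y - π y) ^ 2 ≤ (lam P π ^ k) ^ 2 * π y := by
  set f : V → ℝ := Pi.single y 1 - π y • 1 with hf
  have hmean : l2Form π 1 f = 0 := by
    rw [hf, map_sub, map_smul, (l2Form_isSymm π).eq, l2Form_single_left, hrev.l2Form_one_one]
    simp
  have hnorm : l2Form π f f ≤ π y := by
    have hval : l2Form π f f = π y * (1 - π y) := by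
      simp only [hf, map_sub, map_smul, LinearMap.sub_apply, LinearMap.smul_apply, smul_eq_mul,
        (l2Form_isSymm π).eq 1 (Pi.single y 1), l2Form_single_left, hrev.l2Form_one_one,
        Pi.single_eq_same, Pi.one_apply]
      ring
    rw [hval]
    exact mul_le_of_le_one_right (hrev.nonneg y) (sub_le_self _ (hrev.nonneg y))
  have hpow : (P ^ k *ᵥ f) x = (P ^ k) x y - π y := by
    simp [hf, Matrix.mulVec_sub, Matrix.mulVec_smul, (hP.pow k).mulVec_one]
  calc π x * ((P ^ k) x y - π y) ^ 2
      ≤ l2Form π (P ^ k *ᵥ f) (P ^ k *ᵥ f) := hpow ▸ mul_sq_le_l2Form_self hrev.nonneg _ x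
    _ ≤ (lam P π ^ k) ^ 2 * l2Form π f f := hrev.l2Form_pow_mulVec_self_le hP hmean k
    _ ≤ (lam P π ^ k) ^ 2 * π y := by gcongr

theorem IsReversible.pow_apply_le_two_mul (hP : IsStochastic P) (hrev : IsReversible P π) {k : ℕ}
    (hk : lam P π ^ k ≤ pimin π) (x y : V) : (P ^ k) x y ≤ 2 * π y := by
  have hlam : 0 ≤ lam P π ^ k := pow_nonneg (lam_nonneg P π) k
  have hsq : π x * ((P ^ k) x y - π y) ^ 2 ≤ π x * π y ^ 2 :=
    calc π x * ((P ^ k) x y - π y) ^ 2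
        ≤ (lam P π ^ k) ^ 2 * π y := hrev.mul_sq_pow_apply_sub_le hP k x y
      _ = lam P π ^ k * lam P π ^ k * π y := by rw [sq]
      _ ≤ π x * π y * π y := by
          gcongr
          exacts [hrev.nonneg y, hrev.nonneg x, hk.trans (pimin_le π x), hk.trans (pimin_le π y)]
      _ = π x * π y ^ 2 := by ring
  have hdiff : (P ^ k) x y - π y ≤ π y :=
    (abs_le_of_sq_le_sq' (le_of_mul_le_mul_left hsq (hrev.1 x)) (hrev.nonneg y)).2
  linarith

end Mixing

section HittingFromStationarity

open scoped Matrix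

variable {V : Type*} [Fintype V] {P : Matrix V V ℝ} {π f h : V → ℝ} {S : Set V}

theorem IsReversible.poincare (hP : IsStochastic P) (hrev : IsReversible P π) (f : V → ℝ) :
    (1 - lam P π) * (l2Form π f f - l2Form π 1 f ^ 2) ≤
      l2Form π f f - l2Form π f (P *ᵥ f) := by
  set m := l2Form π 1 f with hm
  have hmean : l2Form π 1 (f - m • 1) = 0 := by
    simp only [map_sub, map_smul, smul_eq_mul, hrev.l2Form_one_one, ← hm]
    ring
  have hgap := (abs_le.1 (abs_l2Form_mulVec_le_lam_mul (P := P) hrev.1 hmean)).2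
  simp only [Matrix.mulVec_sub, Matrix.mulVec_smul, hP.mulVec_one, map_sub, map_smul,
    LinearMap.sub_apply, LinearMap.smul_apply, smul_eq_mul, hrev.l2Form_one_one,
    hrev.l2Form_one_mulVec hP, (l2Form_isSymm π).eq f 1, ← hm] at hgap
  linarith

theorem sq_l2Form_one_le_of_eqOn_zero (hπ : 0 ≤ π) (hsum : ∑ x, π x = 1) (hf : Set.EqOn f 0 S) :
    l2Form π 1 f ^ 2 ≤ (1 - piOf π S) * l2Form π f f := by
  have hmean : l2Form π (Sᶜ.indicator 1) f = l2Form π 1 f := by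
    refine sum_congr rfl fun x _ ↦ ?_
    by_cases hx : x ∈ S
    · simp [hx, hf hx]
    · simp [hx]
  have hmass : l2Form π (Sᶜ.indicator 1) (Sᶜ.indicator 1) = 1 - piOf π S := by
    rw [← hsum, piOf, ← sum_sub_distrib]
    refine sum_congr rfl fun x _ ↦ ?_
    by_cases hx : x ∈ S <;> simp [hx]
  rw [← hmean, ← hmass]
  exact sq_l2Form_le hπ _ _

theorem IsReversible.one_sub_lam_mul_piOf_mul_le (hP : IsStochastic P) (hrev : IsReversible P π)
    (hlam : lam P π ≤ 1) (hf : Set.EqOn f 0 S) :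
    (1 - lam P π) * piOf π S * l2Form π f f ≤ l2Form π f f - l2Form π f (P *ᵥ f) :=
  calc (1 - lam P π) * piOf π S * l2Form π f f
      = (1 - lam P π) * (l2Form π f f - (1 - piOf π S) * l2Form π f f) := by ring
    _ ≤ (1 - lam P π) * (l2Form π f f - l2Form π 1 f ^ 2) := by
        have := sub_nonneg.2 hlam
        gcongr
        exact sq_l2Form_one_le_of_eqOn_zero hrev.nonneg hrev.2.1 hf
    _ ≤ l2Form π f f - l2Form π f (P *ᵥ f) := hrev.poincare hP f

theorem piOf_pos (hπ : ∀ x, 0 < π x) (hS : S.Nonempty) : 0 < piOf π S := by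
  obtain ⟨x, hx⟩ := hS
  exact sum_pos' (fun y _ ↦ Set.indicator_nonneg (fun z _ ↦ (hπ z).le) y)
    ⟨x, mem_univ x, by simpa [hx] using hπ x⟩

theorem IsReversible.l2Form_one_le_of_sub_mulVec_le_one (hP : IsStochastic P)
    (hrev : IsReversible P π) (hlam : lam P π < 1) (hS : S.Nonempty) (h0 : 0 ≤ h)
    (hhS : Set.EqOn h 0 S) (hh : ∀ x ∉ S, h x - (P *ᵥ h) x ≤ 1) :
    l2Form π 1 h ≤ 1 / ((1 - lam P π) * piOf π S) := by
  have hrate : 0 < (1 - lam P π) * piOf π S := mul_pos (sub_pos.2 hlam) (piOf_pos hrev.1 hS)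
  have henergy : l2Form π h h - l2Form π h (P *ᵥ h) ≤ l2Form π 1 h := by
    rw [← map_sub]
    refine sum_le_sum fun x _ ↦ mul_le_mul_of_nonneg_left ?_ (hrev.nonneg x)
    by_cases hx : x ∈ S
    · simp [hhS hx]
    · simpa using mul_le_of_le_one_right (h0 x) (hh x hx)
  have hjensen : l2Form π 1 h ^ 2 ≤ l2Form π h h := by
    simpa [hrev.l2Form_one_one] using sq_l2Form_le hrev.nonneg 1 h
  have hquad : (1 - lam P π) * piOf π S * l2Form π 1 h ^ 2 ≤ l2Form π 1 h :=
    calc (1 - lam P π) * piOf π S * l2Form π 1 h ^ 2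
        ≤ (1 - lam P π) * piOf π S * l2Form π h h := by gcongr
      _ ≤ l2Form π h h - l2Form π h (P *ᵥ h) :=
          hrev.one_sub_lam_mul_piOf_mul_le hP hlam.le hhS
      _ ≤ l2Form π 1 h := henergy
  rw [le_div_iff₀ hrate]
  by_contra! hlt
  nlinarith [pos_of_mul_pos_left (one_pos.trans hlt) hrate.le]

end HittingFromStationarity

section Survival

open scoped Matrix

variable {V : Type*} [Fintype V] {P : Matrix V V ℝ} {π : V → ℝ} {S : Set V}

/-- `survival P S n x = Pr_x[T_S^+ > n]`, the probability that the chain started at `x` avoids `S`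
at times `1, …, n`, computed by conditioning on the first step. -/
noncomputable def survival (P : Matrix V V ℝ) (S : Set V) : ℕ → V → ℝ
  | 0 => 1
  | n + 1 => P *ᵥ Sᶜ.indicator (survival P S n)

theorem survival_nonneg (hP : IsStochastic P) (S : Set V) (n : ℕ) : 0 ≤ survival P S n := by
  induction n with
  | zero => exact zero_le_one
  | succ n ih =>
    rw [← Matrix.mulVec_zero P]
    exact hP.mulVec_mono (Set.indicator_nonneg fun x _ ↦ ih x)

theorem indicator_survival_le (hP : IsStochastic P) (S : Set V) (n : ℕ) :
    Sᶜ.indicator (survival P S n) ≤ survival P S n :=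
  Set.indicator_le_self' fun x _ ↦ survival_nonneg hP S n x

theorem survival_le_one (hP : IsStochastic P) (S : Set V) (n : ℕ) : survival P S n ≤ 1 := by
  induction n with
  | zero => exact le_rfl
  | succ n ih =>
    rw [← hP.mulVec_one]
    exact hP.mulVec_mono ((indicator_survival_le hP S n).trans ih)

theorem survival_add_succ_le [DecidableEq V] (hP : IsStochastic P) (S : Set V) (n k : ℕ) :
    survival P S (n + (k + 1)) ≤ P ^ (k + 1) *ᵥ Sᶜ.indicator (survival P S n) := by
  induction k with
  | zero => exact (congrArg (· *ᵥ _) (pow_one P)).ge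
  | succ k ih =>
    rw [pow_succ', ← Matrix.mulVec_mulVec]
    exact hP.mulVec_mono ((indicator_survival_le hP S _).trans ih)

theorem sum_indicator_survival_sub_mulVec (P : Matrix V V ℝ) (n : ℕ) {x : V} (hx : x ∉ S) :
    (∑ t ∈ range n, Sᶜ.indicator (survival P S t)) x -
      (P *ᵥ ∑ t ∈ range n, Sᶜ.indicator (survival P S t)) x = 1 - survival P S n x := by
  rw [Matrix.mulVec_sum, Finset.sum_apply, Finset.sum_apply, ← sum_sub_distrib]
  simp only [Set.indicator_of_mem (Set.mem_compl hx)]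
  exact sum_range_sub' (fun t ↦ survival P S t x) n

theorem IsReversible.l2Form_one_sum_indicator_survival_le (hP : IsStochastic P)
    (hrev : IsReversible P π) (hlam : lam P π < 1) (hS : S.Nonempty) (n : ℕ) :
    l2Form π 1 (∑ t ∈ range n, Sᶜ.indicator (survival P S t)) ≤
      1 / ((1 - lam P π) * piOf π S) := by
  refine hrev.l2Form_one_le_of_sub_mulVec_le_one hP hlam hS ?_ (fun x hx ↦ ?_) fun x hx ↦ ?_
  · exact sum_nonneg fun t _ ↦ Set.indicator_nonneg fun x _ ↦ survival_nonneg hP S t x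
  · simp [Finset.sum_apply, hx]
  · rw [sum_indicator_survival_sub_mulVec P n hx]
    exact sub_le_self 1 (survival_nonneg hP S n x)

theorem mulVec_apply_le_of_apply_le {x : V} {C : ℝ} (hC : ∀ y, P x y ≤ C * π y) {h : V → ℝ}
    (h0 : 0 ≤ h) : (P *ᵥ h) x ≤ C * l2Form π 1 h := by
  simp only [l2Form_apply, Matrix.mulVec, dotProduct, mul_sum, Pi.one_apply, one_mul, ← mul_assoc]
  exact sum_le_sum fun y _ ↦ mul_le_mul_of_nonneg_right (hC y) (h0 y)

theorem IsReversible.sum_survival_le [DecidableEq V] (hP : IsStochastic P)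
    (hrev : IsReversible P π) (hlam : lam P π < 1) (hS : S.Nonempty) {x : V} {C : ℝ} {k : ℕ}
    (hC0 : 0 ≤ C) (hC : ∀ y, (P ^ (k + 1)) x y ≤ C * π y) (n : ℕ) :
    ∑ t ∈ range n, survival P S t x ≤ (k + 1) + C * (1 / ((1 - lam P π) * piOf π S)) := by
  set h := ∑ t ∈ range n, Sᶜ.indicator (survival P S t) with hh
  have hbefore : ∑ t ∈ range (k + 1), survival P S t x ≤ k + 1 := by
    simpa using sum_le_sum fun t (_ : t ∈ range (k + 1)) ↦ survival_le_one hP S t x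
  have hafter : ∑ t ∈ range n, survival P S (k + 1 + t) x ≤ (P ^ (k + 1) *ᵥ h) x := by
    rw [hh, Matrix.mulVec_sum, Finset.sum_apply]
    refine sum_le_sum fun t _ ↦ ?_
    rw [add_comm (k + 1)]
    exact survival_add_succ_le hP S t k x
  calc ∑ t ∈ range n, survival P S t x
      ≤ ∑ t ∈ range (k + 1 + n), survival P S t x :=
        sum_le_sum_of_subset_of_nonneg (range_subset_range.2 (Nat.le_add_left n (k + 1)))
          fun t _ _ ↦ survival_nonneg hP S t x
    _ ≤ (k + 1) + (P ^ (k + 1) *ᵥ h) x := by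
        rw [sum_range_add]
        exact add_le_add hbefore hafter
    _ ≤ (k + 1) + C * l2Form π 1 h := by
        gcongr
        exact mulVec_apply_le_of_apply_le hC
          (sum_nonneg fun t _ ↦ Set.indicator_nonneg fun x _ ↦ survival_nonneg hP S t x)
    _ ≤ (k + 1) + C * (1 / ((1 - lam P π) * piOf π S)) := by
        gcongr
        exact hrev.l2Form_one_sum_indicator_survival_le hP hlam hS n

theorem exists_pow_succ_le {l m : ℝ} (hl0 : 0 ≤ l) (hl1 : l < 1) (hm0 : 0 < m) (hm1 : m ≤ 1) :
    ∃ k : ℕ, l ^ (k + 1) ≤ m ∧ (k + 1 : ℝ) ≤ 1 / (1 - l) * Real.log (Real.exp 1 / m) := by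
  have hgap : 0 < 1 - l := sub_pos.2 hl1
  have hlog : 0 ≤ -Real.log m := neg_nonneg.2 (Real.log_nonpos hm0.le hm1)
  set k := ⌊-Real.log m / (1 - l)⌋₊
  refine ⟨k, ?_, ?_⟩
  · have hk : -Real.log m < (k + 1) * (1 - l) :=
      (div_lt_iff₀ hgap).1 (Nat.lt_floor_add_one _)
    calc l ^ (k + 1) ≤ Real.exp (-(1 - l)) ^ (k + 1) := by
          gcongr
          linarith [Real.add_one_le_exp (-(1 - l))]
      _ = Real.exp (-((k + 1) * (1 - l))) := by
          rw [← Real.exp_nat_mul]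
          push_cast
          ring_nf
      _ ≤ Real.exp (Real.log m) := Real.exp_le_exp.2 (by linarith)
      _ = m := Real.exp_log hm0
  · have hk : k * (1 - l) ≤ -Real.log m :=
      (le_div_iff₀ hgap).1 (Nat.floor_le (div_nonneg hlog hgap.le))
    rw [Real.log_div (Real.exp_ne_zero 1) hm0.ne', Real.log_exp, one_div, ← div_eq_inv_mul,
      le_div_iff₀ hgap]
    linarith

theorem IsReversible.sum_survival_le_three_div_mul_max (hP : IsStochastic P)
    (hrev : IsReversible P π) (hlam : lam P π < 1) (hS : S.Nonempty) (x : V) (n : ℕ) :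
    ∑ t ∈ range n, survival P S t x ≤ 3 / (1 - lam P π) *
      max (Real.log (2 * Real.exp 1 / pimin π)) (1 / piOf π S) := by
  classical
  have : Nonempty V := ⟨x⟩
  have hmin : 0 < pimin π := pimin_pos hrev.1
  have hgap : 0 < 1 - lam P π := sub_pos.2 hlam
  obtain ⟨k, hmix, hk⟩ := exists_pow_succ_le (lam_nonneg P π) hlam hmin
    ((pimin_le π x).trans (hrev.le_one x))
  set M := max (Real.log (2 * Real.exp 1 / pimin π)) (1 / piOf π S)
  have hM : Real.log (Real.exp 1 / pimin π) ≤ M := by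
    refine le_max_of_le_left (Real.log_le_log (by positivity) ?_)
    gcongr
    linarith [Real.exp_pos 1]
  calc ∑ t ∈ range n, survival P S t x
      ≤ (k + 1) + 2 * (1 / ((1 - lam P π) * piOf π S)) :=
        hrev.sum_survival_le hP hlam hS zero_le_two (hrev.pow_apply_le_two_mul hP hmix x) n
    _ ≤ 1 / (1 - lam P π) * Real.log (Real.exp 1 / pimin π) +
          2 * (1 / ((1 - lam P π) * piOf π S)) := by gcongr
    _ = 1 / (1 - lam P π) * (Real.log (Real.exp 1 / pimin π) + 2 * (1 / piOf π S)) := by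
        field_simp
    _ ≤ 1 / (1 - lam P π) * (M + 2 * M) := by
        gcongr
        exact le_max_right _ _
    _ = 3 / (1 - lam P π) * M := by ring

end Survival

section ReturnTime

variable {V : Type*} {P : Matrix V V ℝ} {S : Set V}

theorem natCast_lt_hitPlus_iff {ω : ℕ → V} {n : ℕ} :
    (n : ℕ∞) < hitPlus S ω ↔ ∀ i, 1 ≤ i → i ≤ n → ω i ∉ S := by
  rw [← ENat.add_one_le_iff (ENat.natCast_ne_top n), hitPlus, le_sInf_iff, Set.forall_mem_image]
  refine forall_congr' fun i ↦ ?_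
  rw [Set.mem_ofPred_eq, and_imp]
  norm_cast
  grind

variable [MeasurableSpace V] {μ : V → Measure (ℕ → V)}

theorem measurableSet_lt_hitPlus (hS : MeasurableSet S) (n : ℕ) :
    MeasurableSet {ω : ℕ → V | (n : ℕ∞) < hitPlus S ω} := by
  simp only [natCast_lt_hitPlus_iff, Set.ofPred_forall]
  exact .iInter fun i ↦ .iInter fun _ ↦ .iInter fun _ ↦ (hS.preimage (measurable_pi_apply i)).compl

variable [DecidableEq V]

theorem IsMarkovChain.measure_cylinder_succ (hμ : IsMarkovChain P μ) (x : V) (w : ℕ → V) (s : ℕ) :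
    μ x (PiNat.cylinder w (s + 1)) =
      ENNReal.ofReal ((if w 0 = x then 1 else 0) * ∏ i ∈ range s, P (w i) (w (i + 1))) := by
  rw [← hμ.2]
  simp only [PiNat.cylinder, Nat.lt_succ_iff]

variable [Fintype V]

theorem IsMarkovChain.measure_cylinder_update (hP : IsStochastic P) (hμ : IsMarkovChain P μ)
    (x : V) (w : ℕ → V) (s : ℕ) (z : V) :
    μ x (PiNat.cylinder (Function.update w (s + 1) z) (s + 2)) =
      μ x (PiNat.cylinder w (s + 1)) * ENNReal.ofReal (P (w s) z) := by
  have hpast :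
      ∏ i ∈ range s, P (Function.update w (s + 1) z i) (Function.update w (s + 1) z (i + 1)) =
        ∏ i ∈ range s, P (w i) (w (i + 1)) :=
    prod_congr rfl fun i hi ↦ by
      have := mem_range.1 hi
      rw [Function.update_of_ne (by lia), Function.update_of_ne (by lia)]
  rw [hμ.measure_cylinder_succ, hμ.measure_cylinder_succ, ← ENNReal.ofReal_mul', prod_range_succ,
    hpast, Function.update_self, Function.update_of_ne (Nat.succ_ne_self s).symm,
    Function.update_of_ne (Nat.succ_ne_zero s).symm, mul_assoc]
  exact hP.1 _ _

theorem IsMarkovChain.measure_cylinder_inter_avoid_le (hP : IsStochastic P)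
    (hμ : IsMarkovChain P μ) (S : Set V) (x : V) (w : ℕ → V) (s n : ℕ) :
    μ x (PiNat.cylinder w (s + 1) ∩ {ω | ∀ i, s < i → i ≤ s + n → ω i ∉ S}) ≤
      μ x (PiNat.cylinder w (s + 1)) * ENNReal.ofReal (survival P S n (w s)) := by
  classical
  induction n generalizing s w with
  | zero => simpa [survival] using measure_mono Set.inter_subset_left
  | succ n ih =>
    have hsub : PiNat.cylinder w (s + 1) ∩ {ω | ∀ i, s < i → i ≤ s + (n + 1) → ω i ∉ S} ⊆
        ⋃ z ∈ ({z | z ∉ S} : Finset V), PiNat.cylinder (Function.update w (s + 1) z) (s + 2) ∩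
          {ω | ∀ i, s + 1 < i → i ≤ s + 1 + n → ω i ∉ S} := by
      rintro ω ⟨hcyl, havoid⟩
      simp only [Set.mem_iUnion, mem_filter, mem_univ, true_and, exists_prop]
      refine ⟨ω (s + 1), havoid _ (by lia) (by lia), fun i hi ↦ ?_,
        fun i _ _ ↦ havoid i (by lia) (by lia)⟩
      rcases (Nat.lt_succ_iff.1 hi).eq_or_lt with rfl | hlt
      · rw [Function.update_self]
      · rw [Function.update_of_ne hlt.ne, hcyl i hlt]
    have hsurv : survival P S (n + 1) (w s) = ∑ z with z ∉ S, P (w s) z * survival P S n z := by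
      simp [survival, Matrix.mulVec, dotProduct, sum_filter, Set.indicator_apply, ite_not]
    have hnonneg (z : V) : 0 ≤ P (w s) z * survival P S n z :=
      mul_nonneg (hP.1 _ _) (survival_nonneg hP S n z)
    calc _ ≤ ∑ z with z ∉ S, μ x (PiNat.cylinder (Function.update w (s + 1) z) (s + 2) ∩
              {ω | ∀ i, s + 1 < i → i ≤ s + 1 + n → ω i ∉ S}) :=
          (measure_mono hsub).trans (measure_biUnion_finset_le _ _)
      _ ≤ ∑ z with z ∉ S, μ x (PiNat.cylinder w (s + 1)) *
            ENNReal.ofReal (P (w s) z * survival P S n z) := by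
          refine sum_le_sum fun z _ ↦ (ih (Function.update w (s + 1) z) (s + 1)).trans_eq ?_
          rw [hμ.measure_cylinder_update hP, Function.update_self, mul_assoc,
            ENNReal.ofReal_mul (hP.1 _ _)]
      _ = μ x (PiNat.cylinder w (s + 1)) * ENNReal.ofReal (survival P S (n + 1) (w s)) := by
          rw [← mul_sum, hsurv, ENNReal.ofReal_sum_of_nonneg fun z _ ↦ hnonneg z]

theorem IsMarkovChain.measure_lt_hitPlus_le (hP : IsStochastic P) (hμ : IsMarkovChain P μ)
    (S : Set V) (x : V) (n : ℕ) :
    μ x {ω | (n : ℕ∞) < hitPlus S ω} ≤ ENNReal.ofReal (survival P S n x) := by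
  have hsub : {ω | (n : ℕ∞) < hitPlus S ω} ⊆
      ⋃ z, PiNat.cylinder (fun _ ↦ z) (0 + 1) ∩
        {ω : ℕ → V | ∀ i, 0 < i → i ≤ 0 + n → ω i ∉ S} := by
    intro ω hω
    refine Set.mem_iUnion.2 ⟨ω 0, fun i hi ↦ by rw [Nat.lt_one_iff.1 hi], fun i h1 hn ↦ ?_⟩
    exact natCast_lt_hitPlus_iff.1 hω i h1 (by rwa [zero_add] at hn)
  calc μ x {ω | (n : ℕ∞) < hitPlus S ω}
      ≤ ∑ z, μ x (PiNat.cylinder (fun _ ↦ z) (0 + 1) ∩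
          {ω | ∀ i, 0 < i → i ≤ 0 + n → ω i ∉ S}) :=
        (measure_mono hsub).trans (measure_iUnion_fintype_le _ _)
    _ ≤ ∑ z, μ x (PiNat.cylinder (fun _ ↦ z) (0 + 1)) * ENNReal.ofReal (survival P S n z) :=
        sum_le_sum fun z _ ↦ hμ.measure_cylinder_inter_avoid_le hP S x (fun _ ↦ z) 0 n
    _ = ENNReal.ofReal (survival P S n x) := by
        simp [hμ.measure_cylinder_succ, apply_ite ENNReal.ofReal]

end ReturnTime

/-- For any nonempty `S` and any `x`,
`E_x[T_S^+] ≤ (3/(1−λ)) · max (log(2e/π_min)) (1/π(S))`. -/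
theorem stmt7 {G : Type*} [Fintype G] [DecidableEq G] [MeasurableSpace G] [MeasurableSingletonClass G]
    (P : Matrix G G ℝ) (pi : G → ℝ) (μ : G → Measure (ℕ → G))
    (hP : IsStochastic P) (hirr : IsIrreducible P) (hap : IsAperiodic P)
    (hrev : IsReversible P pi) (hμ : IsMarkovChain P μ)
    (S : Set G) (hS : S.Nonempty) (x : G) :
    expHitPlus μ S x ≤ 3 / (1 - lam P pi) *
      max (Real.log (2 * Real.exp 1 / pimin pi)) (1 / piOf pi S) := by
  have hsum := hrev.sum_survival_le_three_div_mul_max hP (hrev.lam_lt_one hP hirr hap) hS x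
  refine ENNReal.toReal_le_of_le_ofReal (by simpa using hsum 0) ?_
  rw [lintegral_toENNReal_eq_tsum_measure (measurableSet_lt_hitPlus S.toFinite.measurableSet)]
  refine ENNReal.tsum_le_of_sum_range_le fun n ↦ ?_
  calc ∑ t ∈ range n, μ x {ω | (t : ℕ∞) < hitPlus S ω}
      ≤ ∑ t ∈ range n, ENNReal.ofReal (survival P S t x) :=
        sum_le_sum fun t _ ↦ hμ.measure_lt_hitPlus_le hP S x t
    _ = ENNReal.ofReal (∑ t ∈ range n, survival P S t x) :=
        (ENNReal.ofReal_sum_of_nonneg fun t _ ↦ survival_nonneg hP S t x).symm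
    _ ≤ _ := ENNReal.ofReal_le_ofReal (hsum n)

end HM
end
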